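/- Let v and u be real-valued functions in L¹([−π,π]) ∩ L²([−π,π]) with Fourier coefficients {v_j} and {u_j}. Suppose |v(ω)| ≤ M₁ < ∞ for almost every ω and Σ_{j=−∞}^{∞} |j| |u_j|² ≤ M₂ < ∞. Then for every n ≥ 1, ‖T_n(vu) − T_n(v) T_n(u)‖_F² ≤ 4 M₁² M₂. -/

import Mathlib

open MeasureTheory

/-- The `j`-th Fourier coefficient `v_j = (1/(2π)) ∫_{−π}^{π} v(ω) e^{−iωj} dω` of an
integrable function `v` on `[−π, π]`. -/
noncomputable def fCoef (v : ℝ → ℝ) (j : ℤ) : ℂ :=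
  (((2 * Real.pi)⁻¹ : ℝ) : ℂ) *
    ∫ ω in Set.Icc (-Real.pi) Real.pi, (v ω : ℂ) * Complex.exp (-(Complex.I * ω * j))

/-- The `n×n` Toeplitz matrix `T_n(v)` with entries `[T_n(v)]_{jk} = v_{j−k}`. -/
noncomputable def Toep (n : ℕ) (v : ℝ → ℝ) : Matrix (Fin n) (Fin n) ℂ :=
  Matrix.of fun j k : Fin n => fCoef v ((j : ℤ) - (k : ℤ))

/-- Complex version of the Fourier coefficient. -/
noncomputable def cCoef (f : ℝ → ℂ) (j : ℤ) : ℂ :=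
  (((2 * Real.pi)⁻¹ : ℝ) : ℂ) *
    ∫ ω in Set.Icc (-Real.pi) Real.pi, f ω * Complex.exp (-(Complex.I * ω * j))

lemma fCoef_eq (v : ℝ → ℝ) (j : ℤ) : fCoef v j = cCoef (fun ω => (v ω : ℂ)) j := rfl

lemma neg_pi_lt_pi : -Real.pi < Real.pi := by linarith [Real.pi_pos]

lemma cCoef_eq_on (f : ℝ → ℂ) (j : ℤ) : cCoef f j = fourierCoeffOn neg_pi_lt_pi f j := by
  rw [fourierCoeffOn_eq_integral, cCoef, intervalIntegral.integral_of_le neg_pi_lt_pi.le,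
    integral_Icc_eq_integral_Ioc, Complex.real_smul]
  have hpi : (Real.pi : ℂ) ≠ 0 := by exact_mod_cast Real.pi_ne_zero
  congr 1
  · congr 1
    rw [one_div]; congr 1; ring
  · congr 1
    ext ω
    rw [fourier_coe_apply, smul_eq_mul, mul_comm]
    congr 2
    push_cast
    field_simp
    ring

lemma parseval {f : ℝ → ℂ} (hf : MemLp f 2 (volume.restrict (Set.Icc (-Real.pi) Real.pi))) :
    HasSum (fun j => ‖cCoef f j‖ ^ 2)
      ((2 * Real.pi)⁻¹ * ∫ ω in Set.Icc (-Real.pi) Real.pi, ‖f ω‖ ^ 2) := by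
  have h := hasSum_sq_fourierCoeffOn neg_pi_lt_pi
    (hf.mono_measure (Measure.restrict_mono Set.Ioc_subset_Icc_self le_rfl))
  simp_rw [← cCoef_eq_on] at h
  rw [intervalIntegral.integral_of_le neg_pi_lt_pi.le, ← integral_Icc_eq_integral_Ioc,
    smul_eq_mul] at h
  convert h using 2
  ring

/-- exponential -/
noncomputable def ee (k : ℤ) (ω : ℝ) : ℂ := Complex.exp (Complex.I * ω * k)

lemma ee_cont (k : ℤ) : Continuous (ee k) := by unfold ee; fun_prop

lemma ee_norm (k : ℤ) (ω : ℝ) : ‖ee k ω‖ = 1 := by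
  have : Complex.I * ω * k = ((ω * k : ℝ) : ℂ) * Complex.I := by push_cast; ring
  rw [ee, this, Complex.norm_exp_ofReal_mul_I]

lemma cCoef_mul_ee (f : ℝ → ℂ) (k j : ℤ) :
    cCoef (fun ω => f ω * ee k ω) j = cCoef f (j - k) := by
  unfold cCoef ee
  congr 2
  ext ω
  rw [mul_assoc, ← Complex.exp_add]
  congr 2
  push_cast
  ring

lemma cCoef_ee (k j : ℤ) : cCoef (ee k) j = if j = k then 1 else 0 := by
  have hpi : (Real.pi : ℂ) ≠ 0 := by exact_mod_cast Real.pi_ne_zero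
  have h := cCoef_mul_ee (fun _ => 1) k j
  simp only [one_mul] at h
  change cCoef (ee k) j = _ at h
  rw [h]
  split_ifs with hjk
  · subst hjk
    simp only [cCoef, sub_self, Int.cast_zero, mul_zero, neg_zero, Complex.exp_zero, mul_one,
      MeasureTheory.setIntegral_const]
    rw [Measure.real, Real.volume_Icc, ENNReal.toReal_ofReal (by linarith [Real.pi_pos])]
    rw [Complex.real_smul]
    push_cast
    field_simp
    ring
  · have hm : ((j - k : ℤ) : ℂ) ≠ 0 := by exact_mod_cast sub_ne_zero.mpr hjk
    generalize j - k = m at hm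
    rw [cCoef, integral_Icc_eq_integral_Ioc, ← intervalIntegral.integral_of_le neg_pi_lt_pi.le]
    have hc : (-(Complex.I * m)) ≠ 0 := neg_ne_zero.mpr (mul_ne_zero Complex.I_ne_zero hm)
    have h2 := integral_exp_mul_complex (a := -Real.pi) (b := Real.pi) hc
    have h3 : ∀ ω : ℝ, (1 : ℂ) * Complex.exp (-(Complex.I * ω * m)) =
        Complex.exp (-(Complex.I * m) * ω) := fun ω => by rw [one_mul]; congr 1; ring
    simp_rw [h3]
    rw [h2]
    have h4 : Complex.exp (-(Complex.I * m) * ((-Real.pi : ℝ) : ℂ)) =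
        Complex.exp (-(Complex.I * m) * (Real.pi : ℝ)) := by
      rw [Complex.exp_eq_exp_iff_exists_int]
      exact ⟨m, by push_cast; ring⟩
    rw [h4]; simp

lemma exp_integrable {f : ℝ → ℂ} (hf : IntegrableOn f (Set.Icc (-Real.pi) Real.pi)) (k : ℤ) :
    IntegrableOn (fun ω => f ω * ee k ω) (Set.Icc (-Real.pi) Real.pi) :=
  Integrable.mul_bdd (c := 1) hf (ee_cont k).aestronglyMeasurable
    (Filter.Eventually.of_forall fun ω => (ee_norm k ω).le)

lemma cCoef_int {f : ℝ → ℂ} (hf : IntegrableOn f (Set.Icc (-Real.pi) Real.pi)) (j : ℤ) :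
    IntegrableOn (fun ω : ℝ => f ω * Complex.exp (-(Complex.I * ω * j)))
      (Set.Icc (-Real.pi) Real.pi) := by
  have := exp_integrable hf (-j)
  refine this.congr (Filter.Eventually.of_forall fun ω => ?_)
  simp [ee]

lemma cCoef_sub {f g : ℝ → ℂ} (hf : IntegrableOn f (Set.Icc (-Real.pi) Real.pi))
    (hg : IntegrableOn g (Set.Icc (-Real.pi) Real.pi)) (j : ℤ) :
    cCoef (fun ω => f ω - g ω) j = cCoef f j - cCoef g j := by
  unfold cCoef
  simp_rw [sub_mul]
  rw [integral_sub (cCoef_int hf j) (cCoef_int hg j), mul_sub]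

lemma cCoef_sum {n : ℕ} {f : Fin n → ℝ → ℂ} (c : Fin n → ℂ)
    (hf : ∀ m, IntegrableOn (f m) (Set.Icc (-Real.pi) Real.pi)) (j : ℤ) :
    cCoef (fun ω => ∑ m, c m * f m ω) j = ∑ m, c m * cCoef (f m) j := by
  unfold cCoef
  simp_rw [Finset.sum_mul, mul_assoc (c _)]
  rw [integral_finsetSum _ fun m _ => (cCoef_int (hf m) j).const_mul (c m), Finset.mul_sum]
  refine Finset.sum_congr rfl fun m _ => ?_
  rw [integral_const_mul]
  ring

lemma count (n : ℕ) (l : ℤ) :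
    (∑ k : Fin n, if 0 ≤ l + (k : ℤ) ∧ l + (k : ℤ) < n then (0 : ℝ) else 1) ≤ |(l : ℝ)| := by
  have h0 : (∑ k : Fin n, if 0 ≤ l + (k : ℤ) ∧ l + (k : ℤ) < n then (0 : ℝ) else 1) =
      ((Finset.univ.filter fun k : Fin n => ¬ (0 ≤ l + (k : ℤ) ∧ l + (k : ℤ) < n)).card : ℝ) := by
    rw [Finset.card_filter]; push_cast
    refine Finset.sum_congr rfl fun k _ => ?_
    by_cases h : 0 ≤ l + (k : ℤ) ∧ l + (k : ℤ) < n <;> simp [h]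
  rw [h0]
  have h1 : (Finset.univ.filter fun k : Fin n => ¬ (0 ≤ l + (k : ℤ) ∧ l + (k : ℤ) < n)).card ≤
      l.natAbs := by
    rcases le_total 0 l with hl | hl
    · have : l.natAbs = (Finset.Ico ((n : ℤ) - l) n).card := by
        rw [Int.card_Ico]; omega
      rw [this]
      refine Finset.card_le_card_of_injOn (fun k => (k : ℤ)) ?_ ?_
      · intro k hk
        have := k.2
        simp only [Finset.coe_filter, Finset.mem_univ, true_and, Set.mem_ofPred_eq] at hk
        simp only [Finset.coe_Ico, Set.mem_Ico]
        omega
      · intro a _ b _ h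
        ext; simpa using h
    · have : l.natAbs = (Finset.Ico (0 : ℤ) (-l)).card := by
        rw [Int.card_Ico]; omega
      rw [this]
      refine Finset.card_le_card_of_injOn (fun k => (k : ℤ)) ?_ ?_
      · intro k hk
        have := k.2
        simp only [Finset.coe_filter, Finset.mem_univ, true_and, Set.mem_ofPred_eq] at hk
        simp only [Finset.coe_Ico, Set.mem_Ico]
        omega
      · intro a _ b _ h
        ext; simpa using h
  calc _ ≤ ((l.natAbs : ℕ) : ℝ) := by exact_mod_cast h1
    _ = |(l : ℝ)| := by rw [Nat.cast_natAbs]; push_cast; rfl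

/-- Lemma, part (iv): `‖T_n(vu) − T_n(v)T_n(u)‖_F² ≤ 4M₁²M₂`. -/
theorem stmt17 (n : ℕ) (hn : 1 ≤ n) (v u : ℝ → ℝ) (M₁ M₂ : ℝ)
    (hv1 : IntegrableOn v (Set.Icc (-Real.pi) Real.pi))
    (hv2 : IntegrableOn (fun ω => (v ω) ^ 2) (Set.Icc (-Real.pi) Real.pi))
    (hu1 : IntegrableOn u (Set.Icc (-Real.pi) Real.pi))
    (hu2 : IntegrableOn (fun ω => (u ω) ^ 2) (Set.Icc (-Real.pi) Real.pi))
    (hM1 : ∀ᵐ ω ∂(volume.restrict (Set.Icc (-Real.pi) Real.pi)), |v ω| ≤ M₁)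
    (hsum : Summable fun j : ℤ => |(j : ℝ)| * ‖fCoef u j‖ ^ 2)
    (hM2 : (∑' j : ℤ, |(j : ℝ)| * ‖fCoef u j‖ ^ 2) ≤ M₂) :
    (∑ j : Fin n, ∑ k : Fin n,
        ‖(Toep n (fun ω => v ω * u ω) - Toep n v * Toep n u) j k‖ ^ 2) ≤
      4 * M₁ ^ 2 * M₂ := by
  set μ := volume.restrict (Set.Icc (-Real.pi) Real.pi) with hμ
  let U : ℝ → ℂ := fun ω => (u ω : ℂ)
  let V : ℝ → ℂ := fun ω => (v ω : ℂ)
  have hU1 : Integrable U μ := hu1.ofReal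
  have hV1 : Integrable V μ := hv1.ofReal
  have hVb : ∀ᵐ ω ∂μ, ‖V ω‖ ≤ M₁ := by
    filter_upwards [hM1] with ω h
    simpa [V] using h
  have hU2 : MemLp U 2 μ := ((memLp_two_iff_integrable_sq hu1.aestronglyMeasurable).2 hu2).ofReal
  have hVtop : MemLp V ⊤ μ := memLp_top_of_bound hV1.aestronglyMeasurable M₁ hVb
  have heetop : ∀ k, MemLp (ee k) ⊤ μ := fun k =>
    memLp_top_of_bound (ee_cont k).aestronglyMeasurable 1
      (Filter.Eventually.of_forall fun ω => (ee_norm k ω).le)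
  have hee2 : ∀ k, MemLp (ee k) 2 μ := fun k => (heetop k).mono_exponent le_top
  let r : Fin n → ℝ → ℂ := fun k ω =>
    U ω * ee k ω - ∑ m : Fin n, fCoef u ((m : ℤ) - k) * ee m ω
  have hr2 : ∀ k, MemLp (r k) 2 μ := by
    intro k
    refine MemLp.sub ?_ ?_
    · exact (heetop k).mul hU2
    · exact memLp_finsetSum _ fun m _ => (hee2 m).const_mul _
  have hVr2 : ∀ k, MemLp (fun ω => V ω * r k ω) 2 μ := fun k => (hr2 k).mul hVtop
  have hcr : ∀ (k : Fin n) (l : ℤ), ‖cCoef (r k) l‖ ^ 2 =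
      (if 0 ≤ l ∧ l < n then (0 : ℝ) else 1) * ‖fCoef u (l - k)‖ ^ 2 := by
    intro k l
    have h1 : cCoef (r k) l =
        fCoef u (l - k) - ∑ m : Fin n, fCoef u ((m : ℤ) - k) * (if l = m then 1 else 0) := by
      simp only [r]
      rw [cCoef_sub (exp_integrable hU1 k)
        (integrable_finsetSum Finset.univ fun (m : Fin n) _ => ((hee2 m).integrable one_le_two).const_mul _),
        cCoef_mul_ee, cCoef_sum _ fun (m : Fin n) => (hee2 m).integrable one_le_two]
      simp_rw [cCoef_ee]
      rfl
    rw [h1]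
    split_ifs with hl
    · obtain ⟨a, ha⟩ := Int.eq_ofNat_of_zero_le hl.1
      have han : a < n := by omega
      rw [Finset.sum_eq_single (⟨a, han⟩ : Fin n)]
      · simp [ha]
      · intro b _ hb
        have : l ≠ (b : ℤ) := fun h => hb (by ext; simp; omega)
        simp [this]
      · simp
    · rw [Finset.sum_eq_zero]
      · simp
      · intro b _
        have : l ≠ (b : ℤ) := fun h => hl (by have := b.2; omega)
        simp [this]
  have hD : ∀ j k : Fin n, (Toep n (fun ω => v ω * u ω) - Toep n v * Toep n u) j k =
      cCoef (fun ω => V ω * r k ω) j := by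
    intro j k
    have hVU : Integrable (fun ω => V ω * U ω) μ :=
      (hU2.mul hVtop (r := 2)).integrable one_le_two
    have h1 : (fun ω => V ω * r k ω) = fun ω => (V ω * U ω) * ee k ω -
        ∑ m : Fin n, fCoef u ((m : ℤ) - k) * (V ω * ee m ω) := by
      ext ω
      simp only [r, mul_sub, Finset.mul_sum]
      congr 1
      · ring
      · exact Finset.sum_congr rfl fun m _ => by ring
    rw [h1, cCoef_sub (exp_integrable hVU k)
        (integrable_finsetSum Finset.univ fun (m : Fin n) _ => (exp_integrable hV1 m).const_mul _),
        cCoef_mul_ee, cCoef_sum _ fun (m : Fin n) => exp_integrable hV1 m]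
    simp_rw [cCoef_mul_ee]
    simp only [Matrix.sub_apply, Matrix.mul_apply, Toep, Matrix.of_apply, fCoef_eq, V, U,
      Complex.ofReal_mul]
    congr 1
    exact Finset.sum_congr rfl fun m _ => mul_comm _ _
  have hcol : ∀ k : Fin n,
      ∑ j : Fin n, ‖(Toep n (fun ω => v ω * u ω) - Toep n v * Toep n u) j k‖ ^ 2 ≤
      M₁ ^ 2 * ((2 * Real.pi)⁻¹ * ∫ ω, ‖r k ω‖ ^ 2 ∂μ) := by
    intro k
    simp_rw [hD]
    have hp := parseval (hVr2 k)
    have hinj : Function.Injective (fun j : Fin n => (j : ℤ)) := fun a b h => by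
      ext; simpa using h
    have h1 : ∑ j : Fin n, ‖cCoef (fun ω => V ω * r k ω) j‖ ^ 2 ≤
        (2 * Real.pi)⁻¹ * ∫ ω, ‖V ω * r k ω‖ ^ 2 ∂μ := by
      have := sum_le_hasSum (Finset.univ.map ⟨_, hinj⟩) (fun i _ => by positivity) hp
      simpa using this
    refine h1.trans ?_
    rw [mul_left_comm]
    refine mul_le_mul_of_nonneg_left ?_ (by positivity)
    rw [← integral_const_mul]
    refine integral_mono_ae (hVr2 k).integrable_norm_pow' ((hr2 k).integrable_norm_pow'.const_mul _) ?_
    filter_upwards [hVb] with ω h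
    simp only [norm_mul, mul_pow]
    gcongr
  have hshift : ∀ k : Fin n, HasSum (fun l : ℤ =>
      (if 0 ≤ l + (k : ℤ) ∧ l + (k : ℤ) < n then (0 : ℝ) else 1) * ‖fCoef u l‖ ^ 2)
      ((2 * Real.pi)⁻¹ * ∫ ω, ‖r k ω‖ ^ 2 ∂μ) := by
    intro k
    have hp := parseval (hr2 k)
    simp_rw [hcr] at hp
    have := (Equiv.addRight (k : ℤ)).hasSum_iff.2 hp
    simpa [Function.comp_def] using this
  have htot := hasSum_sum (s := Finset.univ) fun (k : Fin n) _ => hshift k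
  have hle : ∑ k : Fin n, ((2 * Real.pi)⁻¹ * ∫ ω, ‖r k ω‖ ^ 2 ∂μ) ≤
      ∑' j : ℤ, |(j : ℝ)| * ‖fCoef u j‖ ^ 2 := by
    refine hasSum_le (fun l => ?_) htot hsum.hasSum
    rw [← Finset.sum_mul]
    exact mul_le_mul_of_nonneg_right (count n l) (by positivity)
  have hpos : 0 ≤ M₂ := (tsum_nonneg fun j => by positivity).trans hM2
  rw [Finset.sum_comm]
  calc _ ≤ ∑ k : Fin n, M₁ ^ 2 * ((2 * Real.pi)⁻¹ * ∫ ω, ‖r k ω‖ ^ 2 ∂μ) :=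
        Finset.sum_le_sum fun k _ => hcol k
    _ ≤ M₁ ^ 2 * M₂ := by
        rw [← Finset.mul_sum]
        exact mul_le_mul_of_nonneg_left (hle.trans hM2) (by positivity)
    _ ≤ 4 * M₁ ^ 2 * M₂ := by nlinarith [mul_nonneg (sq_nonneg M₁) hpos]
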